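/- Let S and A be nonempty finite sets with |A| ≥ 2, let P be a transition kernel on S×A (i.e., P(·|s,a) is a probability distribution on S for each (s,a)), let r : S×A → [0,1], γ ∈ [0,1), and λ ≥ 0. Suppose V : ℝ^{S×A} → ℝ^S is three times continuously differentiable and satisfies, for every θ ∈ ℝ^{S×A} and every s ∈ S, the entropy-regularized Bellman equation V(θ)(s) = Σ_{a∈A} π_θ(a|s)·( r(s,a) + γ·Σ_{s'∈S} P(s'|s,a)·V(θ)(s') ) + λ·H(π_θ)(s). Then for all θ, u, v, w ∈ ℝ^{S×A}: (i) ‖dV(θ)[u]‖_∞ ≤ ((8 + 10·λ·log|A|)/(1−γ)²)·‖u‖_∞; (ii) ‖d²V(θ)[u,v]‖_∞ ≤ ((40 + 64·λ·log|A|)/(1−γ)³)·‖u‖_∞·‖v‖_∞; (iii) ‖d³V(θ)[u,v,w]‖_∞ ≤ ((480 + 832·λ·log|A|)/(1−γ)⁴)·‖u‖_∞·‖v‖_∞·‖w‖_∞. -/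

import Mathlib

/-
The score `D (log π_θ(a|s)) = e_{(s,a)} - ∑_b π_θ(b|s) e_{(s,b)}` is a coordinate functional minus a
softmax average, so `D π = π • score` and Leibniz' rule give, by induction on `n`,
`‖Dⁿ π_θ(a|s)‖ ≤ cₙ π_θ(a|s)`. The factor `π_θ(a|s)` on the right makes sums over actions
expectations, hence bounds independent of `|A|`; the number of actions enters only through
`∑_a π |log π| ≤ log |A|`. Differentiating the Bellman equation `n` times, the only term containing
`Dⁿ V` is the discounted expectation of `Dⁿ V`, whose norm is at most `γ ‖Dⁿ V‖`: absorbing it on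
the left costs one factor `1 / (1 - γ)` and leaves derivatives of order `< n`.
-/

open scoped BigOperators

/-- The softmax policy `π_θ(a|s) = exp θ(s,a) / Σ_{a'} exp θ(s,a')`. -/
noncomputable def softmax {S A : Type*} [Fintype A] (θ : S × A → ℝ) (s : S) (a : A) : ℝ :=
  Real.exp (θ (s, a)) / ∑ a' : A, Real.exp (θ (s, a'))

/-- The vector of per-state entropies `H(π_θ)(s) = -Σ_a π_θ(a|s) log π_θ(a|s)`. -/
noncomputable def entropyVec {S A : Type*} [Fintype A] (θ : S × A → ℝ) : S → ℝ :=
  fun s => -∑ a : A, softmax θ s a * Real.log (softmax θ s a)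

section Calculus

lemma norm_iteratedFDeriv_pi_le {E F ι : Type*} [NormedAddCommGroup E] [NormedSpace ℝ E]
    [NormedAddCommGroup F] [NormedSpace ℝ F] [Fintype ι] [Nonempty ι] {f : E → ι → F} {n : ℕ}
    {x : E} {C : ℝ} (hf : ContDiffAt ℝ n f x)
    (h : ∀ i, ‖iteratedFDeriv ℝ n (fun y => f y i) x‖ ≤ C) :
    ‖iteratedFDeriv ℝ n f x‖ ≤ C := by
  have hC : 0 ≤ C := (norm_nonneg _).trans (h (Classical.arbitrary ι))
  refine ContinuousMultilinearMap.opNorm_le_bound hC fun m => ?_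
  refine (pi_norm_le_iff_of_nonneg (by positivity)).2 fun i => ?_
  have hcomp : iteratedFDeriv ℝ n (fun y => f y i) x m = iteratedFDeriv ℝ n f x m i := by
    have := (ContinuousLinearMap.proj (R := ℝ) (φ := fun _ : ι => F) i).iteratedFDeriv_comp_left
      hf le_rfl
    exact DFunLike.congr_fun this m
  rw [← hcomp]
  exact ContinuousMultilinearMap.le_of_opNorm_le (h i) m

lemma norm_proj_le_one {ι : Type*} [Fintype ι] (i : ι) :
    ‖ContinuousLinearMap.proj (R := ℝ) (φ := fun _ : ι => ℝ) i‖ ≤ 1 :=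
  ContinuousLinearMap.opNorm_le_bound _ zero_le_one fun x => by
    simpa using norm_le_pi_norm x i

lemma norm_iteratedFDeriv_smul_const_le {E F : Type*} [NormedAddCommGroup E] [NormedSpace ℝ E]
    [NormedAddCommGroup F] [NormedSpace ℝ F] {f : E → ℝ} {n : ℕ} {x : E}
    (hf : ContDiffAt ℝ n f x) (v : F) :
    ‖iteratedFDeriv ℝ n (fun y => f y • v) x‖ ≤ ‖iteratedFDeriv ℝ n f x‖ * ‖v‖ := by
  have hcomp := ((ContinuousLinearMap.id ℝ ℝ).smulRight v).norm_iteratedFDeriv_comp_left hf le_rfl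
  refine hcomp.trans_eq ?_
  rw [ContinuousLinearMap.norm_smulRight_apply, ContinuousLinearMap.norm_id, one_mul, mul_comm]

lemma norm_iteratedFDeriv_succ_const_add_clm_comp_le {E F G : Type*} [NormedAddCommGroup E]
    [NormedSpace ℝ E] [NormedAddCommGroup F] [NormedSpace ℝ F] [NormedAddCommGroup G]
    [NormedSpace ℝ G] {f : E → F} {n : ℕ} {x : E} (hf : ContDiffAt ℝ (n + 1 : ℕ) f x) (c : G)
    (g : F →L[ℝ] G) :
    ‖iteratedFDeriv ℝ (n + 1) (fun y => c + g (f y)) x‖ ≤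
      ‖g‖ * ‖iteratedFDeriv ℝ (n + 1) f x‖ := by
  have hgf : ContDiffAt ℝ (n + 1 : ℕ) (fun y => g (f y)) x := g.contDiff.contDiffAt.comp x hf
  rw [fun_iteratedFDeriv_add_apply contDiffAt_const hgf, iteratedFDeriv_succ_const, Pi.zero_apply,
    zero_add]
  exact g.norm_iteratedFDeriv_comp_left hf le_rfl

-- The fixed-point identity `B + γ * (B / (1 - γ)) = B / (1 - γ)` settles order zero; in positive
-- order the constant disappears and `‖g‖ ≤ 1` suffices.
lemma norm_iteratedFDeriv_const_add_clm_comp_le {E F G : Type*} [NormedAddCommGroup E]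
    [NormedSpace ℝ E] [NormedAddCommGroup F] [NormedSpace ℝ F] [NormedAddCommGroup G]
    [NormedSpace ℝ G] {f : E → F} {n : ℕ} {x : E} (hf : ContDiffAt ℝ n f x) {c : G}
    {g : F →L[ℝ] G} {γ B : ℝ} (hg : ‖g‖ ≤ γ) (hγ : γ < 1) (hc : n = 0 → ‖c‖ ≤ B)
    (hfn : ‖iteratedFDeriv ℝ n f x‖ ≤ B / (1 - γ) ^ (n + 1)) :
    ‖iteratedFDeriv ℝ n (fun y => c + g (f y)) x‖ ≤ B / (1 - γ) ^ (n + 1) := by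
  obtain _ | n := n
  · simp only [norm_iteratedFDeriv_zero, zero_add, pow_one] at hfn ⊢
    have hγ0 : 0 ≤ γ := (norm_nonneg _).trans hg
    calc ‖c + g (f x)‖ ≤ B + γ * (B / (1 - γ)) :=
          norm_add_le_of_le (hc rfl)
            ((g.le_of_opNorm_le hg _).trans (mul_le_mul_of_nonneg_left hfn hγ0))
      _ = B / (1 - γ) := by
          have := (sub_pos.2 hγ).ne'
          field_simp
          ring
  · calc ‖iteratedFDeriv ℝ (n + 1) (fun y => c + g (f y)) x‖
        ≤ ‖g‖ * ‖iteratedFDeriv ℝ (n + 1) f x‖ :=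
          norm_iteratedFDeriv_succ_const_add_clm_comp_le hf c g
      _ ≤ ‖iteratedFDeriv ℝ (n + 1) f x‖ :=
          mul_le_of_le_one_left (norm_nonneg _) (hg.trans hγ.le)
      _ ≤ B / (1 - γ) ^ (n + 1 + 1) := hfn

end Calculus

section Softmax

variable {S A : Type*} [Fintype A] [Nonempty A]

lemma sum_exp_pos (θ : S × A → ℝ) (s : S) : 0 < ∑ a : A, Real.exp (θ (s, a)) :=
  Finset.sum_pos (fun _ _ => Real.exp_pos _) Finset.univ_nonempty

lemma softmax_pos (θ : S × A → ℝ) (s : S) (a : A) : 0 < softmax θ s a :=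
  div_pos (Real.exp_pos _) (sum_exp_pos θ s)

lemma sum_softmax (θ : S × A → ℝ) (s : S) : ∑ a, softmax θ s a = 1 := by
  simp only [softmax]
  rw [← Finset.sum_div, div_self (sum_exp_pos θ s).ne']

lemma softmax_le_one (θ : S × A → ℝ) (s : S) (a : A) : softmax θ s a ≤ 1 := by
  rw [← sum_softmax θ s]
  exact Finset.single_le_sum (fun b _ => (softmax_pos θ s b).le) (Finset.mem_univ a)

lemma log_softmax (θ : S × A → ℝ) (s : S) (a : A) :
    Real.log (softmax θ s a) = θ (s, a) - Real.log (∑ b, Real.exp (θ (s, b))) := by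
  rw [softmax, Real.log_div (Real.exp_ne_zero _) (sum_exp_pos θ s).ne', Real.log_exp]

lemma sum_softmax_mul_abs_log_le (θ : S × A → ℝ) (s : S) :
    ∑ a, softmax θ s a * |Real.log (softmax θ s a)| ≤ Real.log (Fintype.card A) := by
  have jensen := strictConcaveOn_log_Ioi.concaveOn.le_map_sum (t := Finset.univ)
    (w := softmax θ s) (p := fun a => (softmax θ s a)⁻¹) (fun a _ => (softmax_pos θ s a).le)
    (sum_softmax θ s) (fun a _ => inv_pos.2 (softmax_pos θ s a))
  have hcard : ∑ a, softmax θ s a * (softmax θ s a)⁻¹ = Fintype.card A := by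
    simp [mul_inv_cancel₀ (softmax_pos θ s _).ne']
  simp only [smul_eq_mul, hcard, Real.log_inv] at jensen
  refine le_of_eq_of_le (Finset.sum_congr rfl fun a _ => ?_) jensen
  rw [abs_of_nonpos (Real.log_nonpos (softmax_pos θ s a).le (softmax_le_one θ s a))]

lemma sum_softmax_mul_le (θ : S × A → ℝ) (s : S) {X : A → ℝ} {C : ℝ} (h : ∀ a, X a ≤ C) :
    ∑ a, softmax θ s a * X a ≤ C := by
  calc ∑ a, softmax θ s a * X a ≤ ∑ a, softmax θ s a * C :=
        Finset.sum_le_sum fun a _ => mul_le_mul_of_nonneg_left (h a) (softmax_pos θ s a).le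
    _ = C := by rw [← Finset.sum_mul, sum_softmax, one_mul]

/-- The softmax average `∑_b π_θ(b|s) e_{(s,b)}` of the coordinate functionals at `s`, i.e. the
derivative of the log-partition function `θ ↦ log ∑_b exp θ(s,b)`. -/
noncomputable def softmaxMean (s : S) (θ : S × A → ℝ) : (S × A → ℝ) →L[ℝ] ℝ :=
  ∑ b, softmax θ s b • ContinuousLinearMap.proj (s, b)

section Derivative

variable [Finite S]

lemma hasFDerivAt_log_softmax (θ : S × A → ℝ) (s : S) (a : A) :
    HasFDerivAt (fun θ => Real.log (softmax θ s a))
      (ContinuousLinearMap.proj (s, a) - softmaxMean s θ) θ := by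
  cases nonempty_fintype S
  have hsum : HasFDerivAt (fun θ : S × A → ℝ => ∑ b, Real.exp (θ (s, b)))
      (∑ b, Real.exp (θ (s, b)) • ContinuousLinearMap.proj (R := ℝ) (φ := fun _ => ℝ) (s, b)) θ :=
    HasFDerivAt.fun_sum fun b _ => (hasFDerivAt_apply (s, b) θ).exp
  have hlog := hsum.log (sum_exp_pos θ s).ne'
  have hmean : softmaxMean s θ = (∑ b, Real.exp (θ (s, b)))⁻¹ •
      ∑ b, Real.exp (θ (s, b)) • ContinuousLinearMap.proj (R := ℝ) (φ := fun _ => ℝ) (s, b) := by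
    simp only [softmaxMean, softmax, Finset.smul_sum, smul_smul, div_eq_inv_mul]
  simp only [log_softmax, hmean]
  exact (hasFDerivAt_apply (s, a) θ).fun_sub hlog

lemma fderiv_log_softmax (s : S) (a : A) :
    fderiv ℝ (fun θ : S × A → ℝ => Real.log (softmax θ s a)) =
      fun θ => ContinuousLinearMap.proj (s, a) - softmaxMean s θ :=
  funext fun θ => (hasFDerivAt_log_softmax θ s a).fderiv

lemma fderiv_softmax (s : S) (a : A) :
    fderiv ℝ (fun θ : S × A → ℝ => softmax θ s a) =
      fun θ => softmax θ s a • ContinuousLinearMap.proj (s, a) -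
        softmax θ s a • softmaxMean s θ := by
  cases nonempty_fintype S
  funext θ
  have hexp := (hasFDerivAt_log_softmax θ s a).exp
  simp only [Real.exp_log (softmax_pos _ s a)] at hexp
  rw [hexp.fderiv, smul_sub]

end Derivative

variable [Fintype S]

lemma contDiff_log_softmax {n : WithTop ℕ∞} (s : S) (a : A) :
    ContDiff ℝ n fun θ : S × A → ℝ => Real.log (softmax θ s a) := by
  simp only [log_softmax]
  have hsum : ContDiff ℝ n fun θ : S × A → ℝ => ∑ b, Real.exp (θ (s, b)) := by fun_prop
  exact (contDiff_apply ℝ ℝ (s, a)).sub (hsum.log fun θ => (sum_exp_pos θ s).ne')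

lemma contDiff_softmax {n : WithTop ℕ∞} (s : S) (a : A) :
    ContDiff ℝ n fun θ : S × A → ℝ => softmax θ s a := by
  simpa only [Real.exp_log (softmax_pos _ s a)] using (contDiff_log_softmax s a).exp

lemma contDiff_softmaxMean {n : WithTop ℕ∞} (s : S) :
    ContDiff ℝ n (softmaxMean s : (S × A → ℝ) → (S × A → ℝ) →L[ℝ] ℝ) :=
  ContDiff.sum fun b _ => (contDiff_softmax s b).smul contDiff_const

/-- Constants `cₙ` with `‖Dⁿ π‖ ≤ cₙ π` for every softmax probability `π`; the exponential
generating function solves `c' = c + c²`, the sequence is `1, 2, 6, 26, 150, …`. -/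
def softmaxBound : ℕ → ℕ
  | 0 => 1
  | n + 1 => softmaxBound n +
      ∑ i : Fin (n + 1), n.choose i * softmaxBound i * softmaxBound (n - i)

lemma norm_iteratedFDeriv_softmax_smul_proj_le (n : ℕ) (θ : S × A → ℝ) (s : S) (a : A) :
    ‖iteratedFDeriv ℝ n (fun θ : S × A → ℝ => softmax θ s a •
      (ContinuousLinearMap.proj (s, a) : (S × A → ℝ) →L[ℝ] ℝ)) θ‖ ≤
        ‖iteratedFDeriv ℝ n (fun θ => softmax θ s a) θ‖ :=
  (norm_iteratedFDeriv_smul_const_le (contDiff_softmax s a).contDiffAt _).trans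
    (mul_le_of_le_one_right (norm_nonneg _) (norm_proj_le_one _))

lemma norm_iteratedFDeriv_softmaxMean_le_of_softmax_le {n : ℕ} {θ : S × A → ℝ} {s : S} {C : ℝ}
    (h : ∀ b, ‖iteratedFDeriv ℝ n (fun θ => softmax θ s b) θ‖ ≤ C * softmax θ s b) :
    ‖iteratedFDeriv ℝ n (softmaxMean s) θ‖ ≤ C := by
  have hsum : iteratedFDeriv ℝ n (softmaxMean s) θ =
      ∑ b, iteratedFDeriv ℝ n (fun θ : S × A → ℝ => softmax θ s b •
        (ContinuousLinearMap.proj (s, b) : (S × A → ℝ) →L[ℝ] ℝ)) θ :=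
    iteratedFDeriv_fun_sum_apply fun b _ =>
      ((contDiff_softmax s b).smul contDiff_const).contDiffAt
  calc ‖iteratedFDeriv ℝ n (softmaxMean s) θ‖ ≤ ∑ b, C * softmax θ s b := by
        rw [hsum]
        exact norm_sum_le_of_le _ fun b _ =>
          (norm_iteratedFDeriv_softmax_smul_proj_le n θ s b).trans (h b)
    _ = C := by rw [← Finset.mul_sum, sum_softmax, mul_one]

theorem norm_iteratedFDeriv_softmax_le (n : ℕ) (θ : S × A → ℝ) (s : S) (a : A) :
    ‖iteratedFDeriv ℝ n (fun θ => softmax θ s a) θ‖ ≤ softmaxBound n * softmax θ s a := by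
  induction n using Nat.strong_induction_on generalizing a with
  | _ n ih =>
    obtain _ | n := n
    · simp [softmaxBound, abs_of_pos (softmax_pos θ s a)]
    have hmean : ‖iteratedFDeriv ℝ n (fun θ => softmax θ s a • softmaxMean s θ) θ‖ ≤
        ∑ i ∈ Finset.range (n + 1),
          n.choose i * (softmaxBound i * softmax θ s a) * softmaxBound (n - i) := by
      refine (norm_iteratedFDeriv_smul_le (contDiff_softmax s a) (contDiff_softmaxMean s)
        θ le_rfl).trans (Finset.sum_le_sum fun i hi => ?_)
      have hi : i < n + 1 := Finset.mem_range.1 hi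
      have := softmax_pos θ s a
      gcongr
      · exact ih i hi a
      · exact norm_iteratedFDeriv_softmaxMean_le_of_softmax_le (ih (n - i) (by lia))
    calc ‖iteratedFDeriv ℝ (n + 1) (fun θ => softmax θ s a) θ‖
        = ‖iteratedFDeriv ℝ n (fun θ => softmax θ s a • ContinuousLinearMap.proj (s, a) -
            softmax θ s a • softmaxMean s θ) θ‖ := by
          rw [← norm_iteratedFDeriv_fderiv, fderiv_softmax]
      _ ≤ softmaxBound n * softmax θ s a + ∑ i ∈ Finset.range (n + 1),
            n.choose i * (softmaxBound i * softmax θ s a) * softmaxBound (n - i) := by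
          rw [fun_iteratedFDeriv_sub_apply
            ((contDiff_softmax s a).fun_smul contDiff_const).contDiffAt
            ((contDiff_softmax s a).fun_smul (contDiff_softmaxMean s)).contDiffAt]
          exact norm_sub_le_of_le ((norm_iteratedFDeriv_softmax_smul_proj_le n θ s a).trans
            (ih n n.lt_succ_self a)) hmean
      _ = softmaxBound (n + 1) * softmax θ s a := by
          rw [softmaxBound, Finset.sum_range]
          push_cast
          rw [add_mul, Finset.sum_mul]
          congr 1
          exact Finset.sum_congr rfl fun i _ => by ring

lemma norm_iteratedFDeriv_softmaxMean_le (n : ℕ) (θ : S × A → ℝ) (s : S) :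
    ‖iteratedFDeriv ℝ n (softmaxMean s) θ‖ ≤ softmaxBound n :=
  norm_iteratedFDeriv_softmaxMean_le_of_softmax_le (norm_iteratedFDeriv_softmax_le n θ s)

lemma norm_iteratedFDeriv_sum_softmax_mul_le {X : A → (S × A → ℝ) → ℝ} {n : ℕ}
    (hX : ∀ a, ContDiff ℝ n (X a)) {θ : S × A → ℝ} {s : S} {K : ℕ → ℝ}
    (hK : ∀ k ≤ n, ∑ a, softmax θ s a * ‖iteratedFDeriv ℝ k (X a) θ‖ ≤ K k) :
    ‖iteratedFDeriv ℝ n (fun θ => ∑ a, softmax θ s a * X a θ) θ‖ ≤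
      ∑ i ∈ Finset.range (n + 1), n.choose i * softmaxBound (n - i) * K i := by
  have hleibniz (a : A) : ‖iteratedFDeriv ℝ n (fun θ => softmax θ s a * X a θ) θ‖ ≤
      ∑ i ∈ Finset.range (n + 1), n.choose i * softmaxBound (n - i) *
        (softmax θ s a * ‖iteratedFDeriv ℝ i (X a) θ‖) := by
    simp only [mul_comm _ (X a _)]
    refine (norm_iteratedFDeriv_mul_le (hX a) (contDiff_softmax s a) θ le_rfl).trans
      (Finset.sum_le_sum fun i _ => ?_)
    calc n.choose i * ‖iteratedFDeriv ℝ i (X a) θ‖ *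
          ‖iteratedFDeriv ℝ (n - i) (fun θ => softmax θ s a) θ‖
        ≤ n.choose i * ‖iteratedFDeriv ℝ i (X a) θ‖ * (softmaxBound (n - i) * softmax θ s a) := by
          gcongr
          exact norm_iteratedFDeriv_softmax_le (n - i) θ s a
      _ = _ := by ring
  rw [iteratedFDeriv_fun_sum_apply fun a _ => ((contDiff_softmax s a).mul (hX a)).contDiffAt]
  refine (norm_sum_le_of_le _ fun a _ => hleibniz a).trans ?_
  rw [Finset.sum_comm]
  refine Finset.sum_le_sum fun i hi => ?_
  rw [← Finset.mul_sum]
  gcongr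
  exact hK i (Nat.lt_succ_iff.1 (Finset.mem_range.1 hi))

end Softmax

section Entropy

/-- Bounds on the mean absolute value (order `0`, where `L` stands for `log |A|`) and on the
derivatives (positive order) of the log-probabilities of a softmax policy. -/
noncomputable def logSoftmaxBound (L : ℝ) : ℕ → ℝ
  | 0 => L
  | 1 => 2
  | n + 2 => softmaxBound (n + 1)

/-- Bound on the `n`-th derivative of the entropy of a softmax policy, as a function of
`L = log |A|`. -/
noncomputable def entropyBound (L : ℝ) (n : ℕ) : ℝ :=
  ∑ i ∈ Finset.range (n + 1), n.choose i * softmaxBound (n - i) * logSoftmaxBound L i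

variable {S A : Type*} [Fintype S] [Fintype A] [Nonempty A]

lemma contDiff_entropyVec {n : WithTop ℕ∞} (s : S) :
    ContDiff ℝ n fun θ : S × A → ℝ => entropyVec θ s :=
  (ContDiff.sum fun a _ => (contDiff_softmax s a).mul (contDiff_log_softmax s a)).neg

lemma norm_iteratedFDeriv_succ_log_softmax_le (n : ℕ) (θ : S × A → ℝ) (s : S) (a : A) (L : ℝ) :
    ‖iteratedFDeriv ℝ (n + 1) (fun θ => Real.log (softmax θ s a)) θ‖ ≤
      logSoftmaxBound L (n + 1) := by
  rw [← norm_iteratedFDeriv_fderiv, fderiv_log_softmax,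
    fun_iteratedFDeriv_sub_apply contDiffAt_const (contDiff_softmaxMean (A := A) s).contDiffAt]
  obtain _ | n := n
  · refine (norm_sub_le_of_le (r₁ := 1) (r₂ := 1) ?_ ?_).trans_eq one_add_one_eq_two
    · simpa using norm_proj_le_one (s, a)
    · simpa [softmaxBound] using norm_iteratedFDeriv_softmaxMean_le 0 θ s
  · rw [iteratedFDeriv_succ_const, Pi.zero_apply, zero_sub, norm_neg]
    exact norm_iteratedFDeriv_softmaxMean_le (n + 1) θ s

lemma sum_softmax_mul_norm_iteratedFDeriv_log_softmax_le (n : ℕ) (θ : S × A → ℝ) (s : S) :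
    ∑ a, softmax θ s a * ‖iteratedFDeriv ℝ n (fun θ => Real.log (softmax θ s a)) θ‖ ≤
      logSoftmaxBound (Real.log (Fintype.card A)) n := by
  obtain _ | n := n
  · simpa [logSoftmaxBound] using sum_softmax_mul_abs_log_le θ s
  · exact sum_softmax_mul_le θ s fun a => norm_iteratedFDeriv_succ_log_softmax_le n θ s a _

theorem norm_iteratedFDeriv_entropyVec_le (n : ℕ) (θ : S × A → ℝ) (s : S) :
    ‖iteratedFDeriv ℝ n (fun θ => entropyVec θ s) θ‖ ≤
      entropyBound (Real.log (Fintype.card A)) n := by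
  have hneg : (fun θ : S × A → ℝ => entropyVec θ s) =
      -fun θ => ∑ a, softmax θ s a * Real.log (softmax θ s a) := rfl
  rw [hneg, iteratedFDeriv_neg_apply, norm_neg]
  exact norm_iteratedFDeriv_sum_softmax_mul_le (fun a => contDiff_log_softmax s a)
    fun k _ => sum_softmax_mul_norm_iteratedFDeriv_log_softmax_le k θ s

end Entropy

section Bellman

/-- The entropy-regularized Bellman equation of the softmax policy with rewards `r`, temperature
`lam` and discounted transitions `q s a`; in a discounted Markov decision process `q s a` is
`x ↦ γ * ∑ s', P s a s' * x s'`. -/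
def SoftBellman {S A : Type*} [Fintype A] (r : S → A → ℝ) (q : S → A → (S → ℝ) →L[ℝ] ℝ)
    (lam : ℝ) (V : (S × A → ℝ) → S → ℝ) : Prop :=
  ∀ θ s, V θ s = ∑ a, softmax θ s a * (r s a + q s a (V θ)) + lam * entropyVec θ s

/-- Coefficients `Bₙ` of the bounds `‖Dⁿ V‖ ≤ Bₙ / (1 - γ) ^ (n + 1)` on the solutions of the
regularized Bellman equation, where `R` bounds the rewards, `lam` is the temperature and `L` stands
for `log |A|`. -/
noncomputable def valueBound (R lam L : ℝ) : ℕ → ℝ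
  | 0 => R + lam * L
  | n + 1 => (∑ i : Fin (n + 1), (n + 1).choose i * softmaxBound (n + 1 - i) *
      valueBound R lam L i) + lam * entropyBound L (n + 1)

variable {S A : Type*} [Fintype S] [Fintype A] [Nonempty A] {r : S → A → ℝ}
  {q : S → A → (S → ℝ) →L[ℝ] ℝ} {lam : ℝ} {V : (S × A → ℝ) → S → ℝ} {n : ℕ} {θ : S × A → ℝ}
  {R γ : ℝ}

lemma SoftBellman.norm_iteratedFDeriv_apply_le (hV : ContDiff ℝ n V)
    (hBell : SoftBellman r q lam V) {s : S} {K : ℕ → ℝ}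
    (hK : ∀ k ≤ n, ∀ a, ‖iteratedFDeriv ℝ k (fun θ => r s a + q s a (V θ)) θ‖ ≤ K k) :
    ‖iteratedFDeriv ℝ n (fun θ => V θ s) θ‖ ≤
      ∑ i ∈ Finset.range (n + 1), n.choose i * softmaxBound (n - i) * K i +
        |lam| * entropyBound (Real.log (Fintype.card A)) n := by
  have hQ (a : A) : ContDiff ℝ n fun θ => r s a + q s a (V θ) :=
    contDiff_const.add ((q s a).contDiff.comp hV)
  have hsum : ContDiff ℝ n fun θ => ∑ a, softmax θ s a * (r s a + q s a (V θ)) :=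
    ContDiff.sum fun a _ => (contDiff_softmax s a).mul (hQ a)
  have hH : ContDiff ℝ n fun θ : S × A → ℝ => lam • entropyVec θ s :=
    (contDiff_entropyVec s).const_smul lam
  simp only [hBell _ s, ← smul_eq_mul (a := lam)]
  rw [fun_iteratedFDeriv_add_apply hsum.contDiffAt hH.contDiffAt,
    iteratedFDeriv_const_smul_apply' (contDiff_entropyVec s).contDiffAt]
  refine norm_add_le_of_le ?_ ?_
  · exact norm_iteratedFDeriv_sum_softmax_mul_le hQ fun k hk => sum_softmax_mul_le θ s (hK k hk)
  · rw [norm_smul, Real.norm_eq_abs]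
    gcongr
    exact norm_iteratedFDeriv_entropyVec_le n θ s

variable [Nonempty S]

lemma SoftBellman.norm_le (hBell : SoftBellman r q lam V) (hV : Continuous V)
    (hr : ∀ s a, |r s a| ≤ R) (hq : ∀ s a, ‖q s a‖ ≤ γ) (hγ : γ < 1) :
    ‖V θ‖ ≤ (R + |lam| * Real.log (Fintype.card A)) / (1 - γ) := by
  have hbell (s : S) : ‖V θ s‖ ≤ R + γ * ‖V θ‖ + |lam| * Real.log (Fintype.card A) := by
    simpa [softmaxBound, entropyBound, logSoftmaxBound] using
      hBell.norm_iteratedFDeriv_apply_le (n := 0) (contDiff_zero.2 hV)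
        (K := fun _ => R + γ * ‖V θ‖)
        (by simpa using fun a =>
          norm_add_le_of_le (hr s a) ((q s a).le_of_opNorm_le (hq s a) (V θ)))
  have hnorm := (pi_norm_le_iff_of_nonempty (V θ)).2 hbell
  rw [le_div_iff₀ (sub_pos.2 hγ)]
  linarith

lemma SoftBellman.norm_iteratedFDeriv_succ_le (hBell : SoftBellman r q lam V)
    (hV : ContDiff ℝ (n + 1 : ℕ) V) (hq : ∀ s a, ‖q s a‖ ≤ γ) (hγ : γ < 1) {K : ℕ → ℝ}
    (hK : ∀ k ≤ n, ∀ s a, ‖iteratedFDeriv ℝ k (fun θ => r s a + q s a (V θ)) θ‖ ≤ K k) :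
    ‖iteratedFDeriv ℝ (n + 1) V θ‖ ≤
      (∑ i ∈ Finset.range (n + 1), (n + 1).choose i * softmaxBound (n + 1 - i) * K i +
        |lam| * entropyBound (Real.log (Fintype.card A)) (n + 1)) / (1 - γ) := by
  have htop (s : S) (a : A) : ‖iteratedFDeriv ℝ (n + 1) (fun θ => r s a + q s a (V θ)) θ‖ ≤
      γ * ‖iteratedFDeriv ℝ (n + 1) V θ‖ :=
    (norm_iteratedFDeriv_succ_const_add_clm_comp_le hV.contDiffAt (r s a) (q s a)).trans
      (mul_le_mul_of_nonneg_right (hq s a) (norm_nonneg _))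
  let K' : ℕ → ℝ := Function.update K (n + 1) (γ * ‖iteratedFDeriv ℝ (n + 1) V θ‖)
  have hK' {k : ℕ} (hk : k < n + 1) : K' k = K k := Function.update_of_ne hk.ne _ _
  have hbell := norm_iteratedFDeriv_pi_le hV.contDiffAt fun s =>
    hBell.norm_iteratedFDeriv_apply_le hV (θ := θ) (s := s) (K := K') fun k hk a => by
      obtain hlt | rfl := hk.lt_or_eq
      · rw [hK' hlt]
        exact hK k (Nat.lt_succ_iff.1 hlt) s a
      · simpa [K'] using htop s a
  rw [Finset.sum_range_succ, Finset.sum_congr rfl fun i hi => by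
    rw [hK' (Finset.mem_range.1 hi)]] at hbell
  simp only [K', Function.update_self, Nat.choose_self, Nat.sub_self, softmaxBound, Nat.cast_one,
    one_mul] at hbell
  rw [le_div_iff₀ (sub_pos.2 hγ)]
  linarith

lemma SoftBellman.norm_iteratedFDeriv_succ_le_of_forall_le (hBell : SoftBellman r q lam V)
    (hV : ContDiff ℝ (n + 1 : ℕ) V) (hr : ∀ s a, |r s a| ≤ R) (hq : ∀ s a, ‖q s a‖ ≤ γ)
    (hγ : γ < 1)
    (ih : ∀ k ≤ n, ‖iteratedFDeriv ℝ k V θ‖ ≤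
      valueBound R |lam| (Real.log (Fintype.card A)) k / (1 - γ) ^ (k + 1)) :
    ‖iteratedFDeriv ℝ (n + 1) V θ‖ ≤
      valueBound R |lam| (Real.log (Fintype.card A)) (n + 1) / (1 - γ) ^ (n + 1 + 1) := by
  set L := Real.log (Fintype.card A)
  have hγ0 : 0 ≤ γ := (norm_nonneg _).trans (hq (Classical.arbitrary S) (Classical.arbitrary A))
  have hgap : 0 < 1 - γ := sub_pos.2 hγ
  have hgap_le : 1 - γ ≤ 1 := sub_le_self 1 hγ0
  have hQ (k : ℕ) (hk : k ≤ n) (s : S) (a : A) :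
      ‖iteratedFDeriv ℝ k (fun θ => r s a + q s a (V θ)) θ‖ ≤
        valueBound R |lam| L k / (1 - γ) ^ (n + 1) := by
    have hVk : ContDiff ℝ k V := hV.of_le (by exact_mod_cast hk.trans n.le_succ)
    have hreward : k = 0 → ‖r s a‖ ≤ valueBound R |lam| L k := by
      rintro rfl
      rw [valueBound]
      exact le_add_of_le_of_nonneg (hr s a)
        (mul_nonneg (abs_nonneg _) (Real.log_natCast_nonneg _))
    have hB : 0 ≤ valueBound R |lam| L k :=
      nonneg_of_mul_nonneg_left ((norm_nonneg _).trans (ih k hk)) (inv_pos.2 (pow_pos hgap _))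
    calc ‖iteratedFDeriv ℝ k (fun θ => r s a + q s a (V θ)) θ‖
        ≤ valueBound R |lam| L k / (1 - γ) ^ (k + 1) :=
          norm_iteratedFDeriv_const_add_clm_comp_le hVk.contDiffAt (hq s a) hγ hreward (ih k hk)
      _ ≤ valueBound R |lam| L k / (1 - γ) ^ (n + 1) :=
          div_le_div_of_nonneg_left hB (pow_pos hgap _)
            (pow_le_pow_of_le_one hgap.le hgap_le (by lia))
  have hentropy : |lam| * entropyBound L (n + 1) ≤
      |lam| * entropyBound L (n + 1) / (1 - γ) ^ (n + 1) := by
    have : 0 ≤ entropyBound L (n + 1) := (norm_nonneg _).trans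
      (norm_iteratedFDeriv_entropyVec_le (n + 1) θ (Classical.arbitrary S))
    exact le_div_self (by positivity) (pow_pos hgap _) (pow_le_one₀ hgap.le hgap_le)
  refine (hBell.norm_iteratedFDeriv_succ_le hV hq hγ hQ).trans ?_
  rw [pow_succ _ (n + 1), ← div_div, valueBound, add_div _ _ ((1 - γ) ^ (n + 1)),
    Finset.sum_div, Finset.sum_range]
  simp only [mul_div_assoc] at hentropy ⊢
  gcongr

theorem SoftBellman.norm_iteratedFDeriv_le (hBell : SoftBellman r q lam V) (hV : ContDiff ℝ n V)
    (hr : ∀ s a, |r s a| ≤ R) (hq : ∀ s a, ‖q s a‖ ≤ γ) (hγ : γ < 1) :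
    ‖iteratedFDeriv ℝ n V θ‖ ≤
      valueBound R |lam| (Real.log (Fintype.card A)) n / (1 - γ) ^ (n + 1) := by
  induction n using Nat.strong_induction_on with
  | _ n ih =>
    obtain _ | n := n
    · simpa [valueBound] using hBell.norm_le hV.continuous hr hq hγ
    · exact hBell.norm_iteratedFDeriv_succ_le_of_forall_le hV hr hq hγ fun k hk =>
        ih k (by lia) (hV.of_le (by exact_mod_cast hk.trans n.le_succ))

end Bellman

section DiscountedTransition

variable {S A : Type*} [Fintype S] {γ : ℝ} {P : S → A → S → ℝ}

/-- The discounted expectation `x ↦ γ * ∑ s', P s a s' * x s'` over the next state of a Markov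
decision process, as a continuous linear functional. -/
noncomputable def discountedTransition (γ : ℝ) (P : S → A → S → ℝ) (s : S) (a : A) :
    (S → ℝ) →L[ℝ] ℝ :=
  γ • ∑ s', P s a s' • ContinuousLinearMap.proj s'

lemma discountedTransition_apply (s : S) (a : A) (x : S → ℝ) :
    discountedTransition γ P s a x = γ * ∑ s', P s a s' * x s' := by
  simp [discountedTransition]

lemma norm_discountedTransition_le (hγ : 0 ≤ γ) {s : S} {a : A} (hP : ∀ s', 0 ≤ P s a s')
    (hsum : ∑ s', P s a s' ≤ 1) : ‖discountedTransition γ P s a‖ ≤ γ := by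
  have hmean : ‖∑ s', P s a s' • ContinuousLinearMap.proj (R := ℝ) (φ := fun _ : S => ℝ) s'‖ ≤
      ∑ s', P s a s' :=
    norm_sum_le_of_le _ fun s' _ => by
      rw [norm_smul, Real.norm_of_nonneg (hP s')]
      exact mul_le_of_le_one_right (hP s') (norm_proj_le_one s')
  rw [discountedTransition, norm_smul, Real.norm_of_nonneg hγ]
  exact mul_le_of_le_one_right hγ (hmean.trans hsum)

end DiscountedTransition

section LowOrders

lemma softmaxBound_zero : softmaxBound 0 = 1 := by rw [softmaxBound]

lemma softmaxBound_one : softmaxBound 1 = 2 := by simp [softmaxBound]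

lemma softmaxBound_two : softmaxBound 2 = 6 := by
  rw [softmaxBound, Fin.sum_univ_two]
  simp [softmaxBound_zero, softmaxBound_one]

lemma softmaxBound_three : softmaxBound 3 = 26 := by
  rw [softmaxBound, Fin.sum_univ_three]
  simp [softmaxBound_zero, softmaxBound_one, softmaxBound_two]

variable (R lam L : ℝ)

lemma entropyBound_one : entropyBound L 1 = 2 * L + 2 := by
  norm_num [entropyBound, logSoftmaxBound, Finset.sum_range_succ, softmaxBound_zero,
    softmaxBound_one]

lemma entropyBound_two : entropyBound L 2 = 6 * L + 10 := by
  norm_num [entropyBound, logSoftmaxBound, Finset.sum_range_succ, softmaxBound_zero,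
    softmaxBound_one, softmaxBound_two, add_assoc]

lemma entropyBound_three : entropyBound L 3 = 26 * L + 54 := by
  norm_num [entropyBound, logSoftmaxBound, Finset.sum_range_succ, softmaxBound_zero,
    softmaxBound_one, softmaxBound_two, softmaxBound_three, add_assoc]

lemma valueBound_one : valueBound R lam L 1 = 2 * R + lam * (4 * L + 2) := by
  rw [valueBound, Fin.sum_univ_one, entropyBound_one]
  simp only [valueBound, softmaxBound_one, Fin.val_eq_zero, zero_add, Nat.choose_zero_right,
    tsub_zero, Nat.cast_one, Nat.cast_ofNat]
  ring

lemma valueBound_two : valueBound R lam L 2 = 14 * R + lam * (28 * L + 18) := by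
  rw [valueBound, Fin.sum_univ_two, entropyBound_two]
  simp only [valueBound, valueBound_one, softmaxBound_one, softmaxBound_two, Fin.val_zero,
    Fin.val_one, Nat.choose_zero_right, Nat.choose_one_right, Nat.reduceAdd, Nat.reduceSub,
    Nat.cast_one, Nat.cast_ofNat]
  ring

lemma valueBound_three : valueBound R lam L 3 = 146 * R + lam * (292 * L + 198) := by
  rw [valueBound, Fin.sum_univ_three, entropyBound_three]
  simp only [valueBound, valueBound_one, valueBound_two, softmaxBound_one, softmaxBound_two,
    softmaxBound_three, Fin.val_zero, Fin.val_one, Fin.val_two, Nat.choose_zero_right,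
    Nat.choose_one_right, Nat.choose_succ_self_right, Nat.reduceAdd, Nat.reduceSub, Nat.cast_one,
    Nat.cast_ofNat]
  ring

variable {lam L}

lemma half_le_log_natCast {n : ℕ} (hn : 2 ≤ n) : 1 / 2 ≤ Real.log n := by
  have : Real.log 2 ≤ Real.log n := Real.log_le_log two_pos (by exact_mod_cast hn)
  linarith [Real.log_two_gt_d9]

lemma valueBound_one_le (hlam : 0 ≤ lam) (hL : 1 / 2 ≤ L) :
    valueBound 1 lam L 1 ≤ 8 + 10 * lam * L := by
  rw [valueBound_one]
  linarith [mul_le_mul_of_nonneg_left hL hlam]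

lemma valueBound_two_le (hlam : 0 ≤ lam) (hL : 1 / 2 ≤ L) :
    valueBound 1 lam L 2 ≤ 40 + 64 * lam * L := by
  rw [valueBound_two]
  linarith [mul_le_mul_of_nonneg_left hL hlam]

lemma valueBound_three_le (hlam : 0 ≤ lam) (hL : 1 / 2 ≤ L) :
    valueBound 1 lam L 3 ≤ 480 + 832 * lam * L := by
  rw [valueBound_three]
  linarith [mul_le_mul_of_nonneg_left hL hlam]

end LowOrders

theorem stmt7_general {S A : Type*} [Fintype S] [Fintype A] [Nonempty S] [Nonempty A]
    {P : S → A → S → ℝ} (hP : ∀ s a, (∀ s', 0 ≤ P s a s') ∧ ∑ s', P s a s' ≤ 1)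
    {r : S → A → ℝ} {R : ℝ} (hr : ∀ s a, |r s a| ≤ R)
    {γ : ℝ} (hγ0 : 0 ≤ γ) (hγ1 : γ < 1) {lam : ℝ}
    {V : (S × A → ℝ) → S → ℝ} {n : ℕ} (hV : ContDiff ℝ n V)
    (hBell : ∀ θ s, V θ s =
      (∑ a : A, softmax θ s a * (r s a + γ * ∑ s', P s a s' * V θ s')) +
        lam * entropyVec θ s)
    (θ : S × A → ℝ) (x : Fin n → S × A → ℝ) :
    ‖iteratedFDeriv ℝ n V θ x‖ ≤
      valueBound R |lam| (Real.log (Fintype.card A)) n / (1 - γ) ^ (n + 1) * ∏ i, ‖x i‖ := by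
  have hsoft : SoftBellman r (discountedTransition γ P) lam V := fun θ s => by
    simpa only [discountedTransition_apply] using hBell θ s
  exact ContinuousMultilinearMap.le_of_opNorm_le (hsoft.norm_iteratedFDeriv_le hV hr
    (fun s a => norm_discountedTransition_le hγ0 (hP s a).1 (hP s a).2) hγ1) x

/-- Bounds on the first three directional derivatives of the
entropy-regularized value function of the softmax policy, characterized by the regularized
Bellman equation.  Sup norms are the Pi-type norms. -/
theorem stmt7 {S A : Type*} [Fintype S] [Fintype A] [Nonempty S] [Nonempty A]
    (hA : 2 ≤ Fintype.card A)
    (P : S → A → S → ℝ) (hP : ∀ s a, (∀ s', 0 ≤ P s a s') ∧ ∑ s', P s a s' = 1)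
    (r : S → A → ℝ) (hr : ∀ s a, 0 ≤ r s a ∧ r s a ≤ 1)
    (γ : ℝ) (hγ0 : 0 ≤ γ) (hγ1 : γ < 1) (lam : ℝ) (hlam : 0 ≤ lam)
    (V : (S × A → ℝ) → S → ℝ) (hV : ContDiff ℝ 3 V)
    (hBell : ∀ θ s, V θ s =
      (∑ a : A, softmax θ s a * (r s a + γ * ∑ s', P s a s' * V θ s')) +
        lam * entropyVec θ s)
    (θ u v w : S × A → ℝ) :
    ‖iteratedFDeriv ℝ 1 V θ ![u]‖ ≤
      ((8 + 10 * lam * Real.log (Fintype.card A)) / (1 - γ) ^ 2) * ‖u‖ ∧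
    ‖iteratedFDeriv ℝ 2 V θ ![u, v]‖ ≤
      ((40 + 64 * lam * Real.log (Fintype.card A)) / (1 - γ) ^ 3) * ‖u‖ * ‖v‖ ∧
    ‖iteratedFDeriv ℝ 3 V θ ![u, v, w]‖ ≤
      ((480 + 832 * lam * Real.log (Fintype.card A)) / (1 - γ) ^ 4) * ‖u‖ * ‖v‖ * ‖w‖ := by
  have hL : 1 / 2 ≤ Real.log (Fintype.card A) := half_le_log_natCast hA
  have habs (s : S) (a : A) : |r s a| ≤ 1 := abs_le.2 ⟨by linarith [hr s a], (hr s a).2⟩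
  have hbound {n : ℕ} (hn : n ≤ 3) {C : ℝ} (x : Fin n → S × A → ℝ)
      (hC : valueBound 1 lam (Real.log (Fintype.card A)) n ≤ C) :
      ‖iteratedFDeriv ℝ n V θ x‖ ≤ C / (1 - γ) ^ (n + 1) * ∏ i, ‖x i‖ := by
    have : 0 < 1 - γ := sub_pos.2 hγ1
    have hgeneral := stmt7_general (fun s a => ⟨(hP s a).1, (hP s a).2.le⟩) habs hγ0 hγ1
      (hV.of_le (by exact_mod_cast hn)) hBell θ x
    rw [abs_of_nonneg hlam] at hgeneral
    exact hgeneral.trans (by gcongr)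
  exact ⟨by simpa using hbound (by lia) ![u] (valueBound_one_le hlam hL),
    by simpa [Fin.prod_univ_two, mul_assoc] using
      hbound (by lia) ![u, v] (valueBound_two_le hlam hL),
    by simpa [Fin.prod_univ_three, mul_assoc] using
      hbound le_rfl ![u, v, w] (valueBound_three_le hlam hL)⟩
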